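/- arXiv:1902.05604 — 2 statements merged into one kernel-verified Lean document; each statement's English description precedes it below -/
import Mathlib

section
/- Let N = (P,T,F,Var) be a UDPN, i, f ℚ⁺-markings, and σ a ℚ⁺-run with i →σ_{ℚ⁺} f. Then there exist ℚ⁺-markings i', f' and a ℚ-run σ' with dval(σ') ⊆ dval(σ) such that: (1) i' is ℚ⁺-reachable from i by a ℚ⁺-run of at most |P|·|dval(σ)| steps; (2) i' →σ'_ℚ f'; (3) f is ℚ⁺-reachable from f' by a ℚ⁺-run of at most |P|·|dval(σ)| steps; (4) i'(p,α) > 0 for every (p,α) ∈ Pre(σ'); and (5) f'(p,α) > 0 for every (p,α) ∈ Post(σ'). -/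
open Finset

noncomputable section
open scoped Classical

/-- An unordered data Petri net over places `P`, transitions `T`, variables `V`,
with countably infinite data domain `D = ℕ`.
`pre p t` is the function `F(p,t) : V → ℕ` and `post t p` is `F(t,p) : V → ℕ`. -/
structure UDPN (P T V : Type) where
  pre : P → T → V → ℕ
  post : T → P → V → ℕ

/-- An X-step `(c, t, π)`: coefficient, transition and mode. -/
structure Step (T V : Type) where
  c : ℚ
  t : T
  π : V → ℕ

variable {P T V : Type} [Fintype P] [Fintype T] [Fintype V]

/-- The `P × V` rational matrix `F(•,t)`. -/
def preMat (N : UDPN P T V) (t : T) (p : P) (x : V) : ℚ := (N.pre p t x : ℚ)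

/-- The displacement `Δ(t) = F(t,•) − F(•,t)` as a `P × V` rational matrix. -/
def delta (N : UDPN P T V) (t : T) (p : P) (x : V) : ℚ :=
  (N.post t p x : ℚ) - (N.pre p t x : ℚ)

/-- `A ∘ π⁻¹`: the `P × ℕ` matrix with `(A∘π⁻¹)(p,α) = A(p,x)` if `α = π x`,
and `0` if `α` is outside the range of `π`. (For injective `π` the sum has at
most one nonzero summand.) -/
def compInv (A : P → V → ℚ) (π : V → ℕ) (p : P) (α : ℕ) : ℚ :=
  ∑ x : V, if π x = α then A p x else 0

/-- Only finitely many nonzero columns. -/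
def FinCols (m : P → ℕ → ℚ) : Prop := {α : ℕ | ∃ p, m p α ≠ 0}.Finite

/-- `IsMarking pos m`: `m` is an X-marking; `pos = true` corresponds to `X = ℚ⁺`
(all entries nonnegative), `pos = false` to `X = ℚ`. -/
def IsMarking (pos : Bool) (m : P → ℕ → ℚ) : Prop :=
  FinCols m ∧ (pos = true → ∀ p α, 0 ≤ m p α)

/-- Data values of a marking. -/
def dvalM (m : P → ℕ → ℚ) : Set ℕ := {α | ∃ p, m p α ≠ 0}

/-- A valid X-step: nonnegative coefficient and injective mode.  -/
def IsStep (s : Step T V) : Prop := 0 ≤ s.c ∧ Function.Injective s.π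

/-- A valid X-run: a finite sequence of X-steps. -/
def IsRun (ρ : List (Step T V)) : Prop := ∀ s ∈ ρ, IsStep s

/-- The effect `c · (Δ(t) ∘ π⁻¹)` of a step. -/
def stepEffect (N : UDPN P T V) (s : Step T V) (p : P) (α : ℕ) : ℚ :=
  s.c * compInv (delta N s.t) s.π p α

/-- The effect `Δ(ρ)` of a run. -/
def runEffect (N : UDPN P T V) (ρ : List (Step T V)) (p : P) (α : ℕ) : ℚ :=
  (ρ.map fun s => stepEffect N s p α).sum

/-- A step `(c,t,π)` is fireable at `m` if `m − c·(F(•,t)∘π⁻¹)` is again an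
X-marking: finitely many nonzero columns and (when `pos`) nonnegative entries. -/
def stepFireable (pos : Bool) (N : UDPN P T V) (m : P → ℕ → ℚ) (s : Step T V) : Prop :=
  FinCols (fun p α => m p α - s.c * compInv (preMat N s.t) s.π p α) ∧
  (pos = true → ∀ p α, 0 ≤ m p α - s.c * compInv (preMat N s.t) s.π p α)

/-- A run is fireable at `m` if each step is fireable at the corresponding
intermediate marking. -/
def runFireable (pos : Bool) (N : UDPN P T V) : (P → ℕ → ℚ) → List (Step T V) → Prop
  | _, [] => True
  | m, s :: ρ => stepFireable pos N m s ∧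
      runFireable pos N (fun p α => m p α + stepEffect N s p α) ρ

/-- `m →ρ_X m'` : `ρ` is fireable at `m` and `m' = m + Δ(ρ)`. -/
def Reaches (pos : Bool) (N : UDPN P T V) (i : P → ℕ → ℚ) (ρ : List (Step T V))
    (f : P → ℕ → ℚ) : Prop :=
  runFireable pos N i ρ ∧ f = fun p α => i p α + runEffect N ρ p α

/-- `f` is X-reachable from `i`. -/
def Reach (pos : Bool) (N : UDPN P T V) (i f : P → ℕ → ℚ) : Prop :=
  ∃ ρ, IsRun ρ ∧ Reaches pos N i ρ f

/-- `vars(t)`. -/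
def varsOf (N : UDPN P T V) (t : T) : Set V :=
  {x | ∃ p, N.pre p t x ≠ 0 ∨ N.post t p x ≠ 0}

/-- `maxvars(N) = max_{t ∈ T} |vars(t)|` (0 if `T` is empty). -/
def maxvars (N : UDPN P T V) : ℕ :=
  Finset.univ.sup fun t : T => (varsOf N t).ncard

/-- `dval(ρ)`: the data values used by a run. -/
def runDval (N : UDPN P T V) (ρ : List (Step T V)) : Set ℕ :=
  {α | ∃ s ∈ ρ, ∃ x ∈ varsOf N s.t, s.π x = α}
/-- For `α ∈ E`: the least element of `{β ∈ E | β > α}` if nonempty, else `min E`. -/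
def nextE (E : Finset ℕ) (α : ℕ) : ℕ :=
  if h : (E.filter fun β => α < β).Nonempty then (E.filter fun β => α < β).min' h
  else if h' : E.Nonempty then E.min' h' else 0

/-- The inverse of `nextE` on `E`: the greatest element of `{γ ∈ E | γ < β}` if
nonempty, else `max E`. -/
def prevE (E : Finset ℕ) (β : ℕ) : ℕ :=
  if h : (E.filter fun γ => γ < β).Nonempty then (E.filter fun γ => γ < β).max' h
  else if h' : E.Nonempty then E.max' h' else 0

/-- The mode `π'` of `rot(E,ω)`, characterized by: the permutation matrix `P'` of
`π'` satisfies `P'(•,α) = P(•,α)` for `α ∉ E` and `P'(•,α) = P(•, nextE α)` for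
`α ∈ E` (i.e. `π' x = α ↔ π x = nextE α` for `α ∈ E`). -/
def rotMode {V : Type} (E : Finset ℕ) (π : V → ℕ) (x : V) : ℕ :=
  if π x ∈ E then prevE E (π x) else π x

/-- `rot(E,ω)`. -/
def rotStep (E : Finset ℕ) (s : Step T V) : Step T V := ⟨s.c, s.t, rotMode E s.π⟩

/-- The uniformization `U(E,ω)`: the concatenation
`rot^0(E, ω/|E|) ⋯ rot^{|E|−1}(E, ω/|E|)`. -/
def uniformize (E : Finset ℕ) (s : Step T V) : List (Step T V) :=
  (List.range E.card).map fun k => (rotStep E)^[k] ⟨s.c / (E.card : ℚ), s.t, s.π⟩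

/-- Column `α` of `Δ(t)·P_π` is zero. -/
def zeroCol (N : UDPN P T V) (s : Step T V) (α : ℕ) : Prop :=
  ∀ p, compInv (delta N s.t) s.π p α = 0

/-- The transposition of the data values `α` and `β`. -/
def swapVal (α β γ : ℕ) : ℕ := if γ = α then β else if γ = β then α else γ

/-- `R(α,E,ω)`: if column `α` of `Δ(t)·P_π` is zero then `ω` itself; otherwise the
step whose permutation matrix is obtained from `P_π` by exchanging columns `α` and
`β`, where `β` is the least datum in `E` whose column of `Δ(t)·P_π` is zero. -/
def replaceStep (N : UDPN P T V) (α : ℕ) (E : Finset ℕ) (s : Step T V) : Step T V :=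
  if zeroCol N s α then s
  else if h : (E.filter fun β => zeroCol N s β).Nonempty then
    ⟨s.c, s.t, fun x => swapVal α ((E.filter fun β => zeroCol N s β).min' h) (s.π x)⟩
  else s

/-- `dec(E,α,σ)`: the concatenation `U(E,R(α,E,σ(1))) ⋯ U(E,R(α,E,σ(n)))`. -/
def decRun (N : UDPN P T V) (α : ℕ) (E : Finset ℕ) (σ : List (Step T V)) :
    List (Step T V) :=
  σ.flatMap fun s => uniformize E (replaceStep N α E s)

/-- A histogram of order `q`: a `V × ℕ` matrix with nonnegative rational entries
and finitely many nonzero columns, every row summing to `q` and every column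
summing to at most `q`. -/
def IsHistogram (H : V → ℕ → ℚ) (q : ℚ) : Prop :=
  0 ≤ q ∧ (∀ x α, 0 ≤ H x α) ∧ ({α | ∃ x, H x α ≠ 0}).Finite ∧
  (∀ x, ∑ᶠ α, H x α = q) ∧ (∀ α, ∑ x : V, H x α ≤ q)

/-- `col(H)`: the nonzero columns of `H`. -/
def colH (H : V → ℕ → ℚ) : Set ℕ := {α | ∃ x, H x α ≠ 0}

/-- The permutation matrix `P_π` of a mode `π`. -/
def permMat {V : Type} (π : V → ℕ) (x : V) (α : ℕ) : ℚ := if π x = α then 1 else 0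

/-- `Pre(ρ)`: pairs `(p,α)` of tokens consumed by the run `ρ`. -/
def preSet (N : UDPN P T V) (ρ : List (Step T V)) : Set (P × ℕ) :=
  {pa | ∃ s ∈ ρ, ∃ x, 0 < N.pre pa.1 s.t x ∧ s.π x = pa.2}

/-- `Post(ρ)`: pairs `(p,α)` of tokens produced by the run `ρ`. -/
def postSet (N : UDPN P T V) (ρ : List (Step T V)) : Set (P × ℕ) :=
  {pa | ∃ s ∈ ρ, ∃ x, 0 < N.post s.t pa.1 x ∧ s.π x = pa.2}

/-- A loop-less UDPN: `PrePlace(t) ∩ PostPlace(t) = ∅` for every transition. -/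
def IsLoopless (N : UDPN P T V) : Prop :=
  ∀ t : T, ¬ ∃ p : P, (∃ x, 0 < N.pre p t x) ∧ (∃ x, 0 < N.post t p x)

set_option linter.unusedSectionVars false

/-- The net obtained by exchanging the consumption and the production of every transition. -/
def UDPN.rev {P T V : Type} (N : UDPN P T V) : UDPN P T V where
  pre p t x := N.post t p x
  post t p x := N.pre p t x

theorem stepEffect_eq (N : UDPN P T V) (s : Step T V) (p : P) (α : ℕ) :
    stepEffect N s p α =
      s.c * compInv (preMat N.rev s.t) s.π p α - s.c * compInv (preMat N s.t) s.π p α := by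
  rw [← mul_sub]
  unfold stepEffect compInv
  rw [← Finset.sum_sub_distrib]
  congr 1
  refine Finset.sum_congr rfl fun x _ => ?_
  split_ifs <;> simp [delta, preMat, UDPN.rev]

theorem compInv_preMat_nonneg (N : UDPN P T V) (t : T) (π : V → ℕ) (p : P) (α : ℕ) :
    0 ≤ compInv (preMat N t) π p α := by
  refine Finset.sum_nonneg fun x _ => ?_
  split_ifs
  · exact Nat.cast_nonneg _
  · exact le_rfl

theorem compInv_preMat_pos_iff (N : UDPN P T V) (t : T) (π : V → ℕ) (p : P) (α : ℕ) :
    0 < compInv (preMat N t) π p α ↔ ∃ x, 0 < N.pre p t x ∧ π x = α := by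
  have h0 : ∀ x ∈ (Finset.univ : Finset V), 0 ≤ if π x = α then preMat N t p x else 0 := by
    intro x _
    split_ifs
    · exact Nat.cast_nonneg _
    · exact le_rfl
  unfold compInv
  rw [Finset.sum_pos_iff_of_nonneg h0]
  constructor
  · rintro ⟨x, -, hx⟩
    split_ifs at hx with h
    · exact ⟨x, by simpa [preMat] using hx, h⟩
    · exact absurd hx (lt_irrefl _)
  · rintro ⟨x, hx, h⟩
    exact ⟨x, Finset.mem_univ x, by simpa [h, preMat] using hx⟩

theorem compInv_eq_zero (A : P → V → ℚ) (π : V → ℕ) (p : P) {α : ℕ} (h : α ∉ Set.range π) :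
    compInv A π p α = 0 :=
  Finset.sum_eq_zero fun x _ => if_neg fun hx => h ⟨x, hx⟩

theorem FinCols.add_mul_compInv {m : P → ℕ → ℚ} (hm : FinCols m) (c : ℚ) (A : P → V → ℚ)
    (π : V → ℕ) : FinCols fun p α => m p α + c * compInv A π p α := by
  refine (hm.union (Set.finite_range π)).subset ?_
  rintro α ⟨p, hp⟩
  by_contra h
  simp only [Set.mem_union, not_or, Set.mem_ofPred_eq, not_exists, not_not] at h
  exact hp (by simp [h.1 p, compInv_eq_zero A π p h.2])

theorem FinCols.sub_mul_compInv {m : P → ℕ → ℚ} (hm : FinCols m) (c : ℚ) (A : P → V → ℚ)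
    (π : V → ℕ) : FinCols fun p α => m p α - c * compInv A π p α := by
  simpa [sub_eq_add_neg] using hm.add_mul_compInv (-c) A π

theorem FinCols.add_stepEffect {m : P → ℕ → ℚ} (hm : FinCols m) (N : UDPN P T V)
    (s : Step T V) : FinCols fun p α => m p α + stepEffect N s p α :=
  hm.add_mul_compInv s.c (delta N s.t) s.π

theorem runFireable_false (N : UDPN P T V) (ρ : List (Step T V)) {m : P → ℕ → ℚ}
    (hm : FinCols m) : runFireable false N m ρ := by
  induction ρ generalizing m with
  | nil => trivial
  | cons s ρ ih => exact ⟨⟨hm.sub_mul_compInv _ _ _, by simp⟩, ih (hm.add_stepEffect N s)⟩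

theorem runEffect_cons (N : UDPN P T V) (s : Step T V) (ρ : List (Step T V)) (p : P) (α : ℕ) :
    runEffect N (s :: ρ) p α = stepEffect N s p α + runEffect N ρ p α := by
  simp [runEffect]

theorem runEffect_append (N : UDPN P T V) (ρ τ : List (Step T V)) (p : P) (α : ℕ) :
    runEffect N (ρ ++ τ) p α = runEffect N ρ p α + runEffect N τ p α := by
  simp [runEffect]

theorem runEffect_reverse (N : UDPN P T V) (ρ : List (Step T V)) (p : P) (α : ℕ) :
    runEffect N ρ.reverse p α = runEffect N ρ p α := by
  simp [runEffect, List.sum_reverse]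

theorem stepEffect_rev (N : UDPN P T V) (s : Step T V) (p : P) (α : ℕ) :
    stepEffect N.rev s p α = -stepEffect N s p α := by
  rw [stepEffect_eq, stepEffect_eq, neg_sub]
  rfl

theorem runEffect_rev (N : UDPN P T V) (ρ : List (Step T V)) (p : P) (α : ℕ) :
    runEffect N.rev ρ p α = -runEffect N ρ p α := by
  induction ρ with
  | nil => simp [runEffect]
  | cons s ρ ih => rw [runEffect_cons, runEffect_cons, ih, stepEffect_rev]; ring

theorem Reaches.cons {pos : Bool} {N : UDPN P T V} {m m' : P → ℕ → ℚ} {s : Step T V}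
    {ρ : List (Step T V)} (hs : stepFireable pos N m s)
    (h : Reaches pos N (fun p α => m p α + stepEffect N s p α) ρ m') :
    Reaches pos N m (s :: ρ) m' := by
  refine ⟨⟨hs, h.1⟩, ?_⟩
  rw [h.2]
  funext p α
  rw [runEffect_cons, add_assoc]

theorem runFireable_append {pos : Bool} {N : UDPN P T V} {ρ τ : List (Step T V)}
    {m : P → ℕ → ℚ} (hρ : runFireable pos N m ρ)
    (hτ : runFireable pos N (fun p α => m p α + runEffect N ρ p α) τ) :
    runFireable pos N m (ρ ++ τ) := by
  induction ρ generalizing m with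
  | nil => simpa [runEffect] using hτ
  | cons s ρ ih =>
    refine ⟨hρ.1, ih hρ.2 ?_⟩
    simpa only [runEffect_cons, add_assoc] using hτ

/-- Firing a run backwards in the reversed net. -/
theorem Reaches.reverse {pos : Bool} {N : UDPN P T V} {ρ : List (Step T V)}
    {m m' : P → ℕ → ℚ} (h : Reaches pos N m ρ m') : Reaches pos N.rev m' ρ.reverse m := by
  refine ⟨?_, ?_⟩
  · induction ρ generalizing m with
    | nil => trivial
    | cons s ρ ih =>
      obtain ⟨⟨hs, hρ⟩, rfl⟩ := h
      rw [List.reverse_cons]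
      refine runFireable_append (ih ⟨hρ, ?_⟩) ⟨?_, trivial⟩
      · funext p α
        rw [runEffect_cons, add_assoc]
      · have key : ∀ p α, m p α + runEffect N (s :: ρ) p α + runEffect N.rev ρ.reverse p α
            - s.c * compInv (preMat N.rev s.t) s.π p α
            = m p α - s.c * compInv (preMat N s.t) s.π p α := by
          intro p α
          rw [runEffect_reverse, runEffect_rev, runEffect_cons, stepEffect_eq]
          ring
        simpa only [stepFireable, key] using hs
  · rw [h.2]
    funext p α
    rw [runEffect_reverse, runEffect_rev]
    ring

theorem exists_small_coeff (N : UDPN P T V) (t : T) (π : V → ℕ) (b : P → ℕ → ℚ) {c : ℚ}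
    (hc : 0 < c) : ∃ ε : ℚ, 0 < ε ∧ ε ≤ c ∧
      ∀ p α, 0 < b p α → ε * compInv (preMat N t) π p α < b p α := by
  have hsmall : ∀ p x, ∀ᶠ ε : ℚ in nhdsWithin 0 (Set.Ioi 0),
      0 < b p (π x) → ε * compInv (preMat N t) π p (π x) < b p (π x) := by
    intro p x
    by_cases hb : 0 < b p (π x)
    · have hlim : Filter.Tendsto (fun ε : ℚ => ε * compInv (preMat N t) π p (π x))
          (nhdsWithin 0 (Set.Ioi 0)) (nhds 0) := by
        have hcont : Continuous fun ε : ℚ => ε * compInv (preMat N t) π p (π x) := by fun_prop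
        simpa using (hcont.tendsto 0).mono_left nhdsWithin_le_nhds
      filter_upwards [hlim.eventually_lt_const hb] with ε hε _ using hε
    · exact Filter.Eventually.of_forall fun ε h => absurd h hb
  have hall := Filter.eventually_all.2 fun p => Filter.eventually_all.2 (hsmall p)
  obtain ⟨ε, ⟨hε, hεc⟩, hεb⟩ := (Filter.Eventually.and (Ioc_mem_nhdsGT hc) hall).exists
  refine ⟨ε, hε, hεc, fun p α hb => ?_⟩
  by_cases hα : α ∈ Set.range π
  · obtain ⟨x, rfl⟩ := hα
    exact hεb p x hb
  · rwa [compInv_eq_zero _ _ _ hα, mul_zero]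

/-- Pairs over the data values `E` that are not positively marked by `b`. -/
def unmarked (E : Finset ℕ) (b : P → ℕ → ℚ) : Finset (P × ℕ) :=
  ((Finset.univ : Finset P) ×ˢ E).filter fun pa => ¬ 0 < b pa.1 pa.2

/-- If `σ` can be fired from a marking whose support is contained in that of `b`, then a short
run `ρ`, made of steps of `σ` with small coefficients, leads from `b` to a marking `b'` that is
positive on everything `σ` touches, and `τ` is what remains of one half of `σ`. -/
theorem exists_saturating_run (N : UDPN P T V) (E : Finset ℕ) (σ : List (Step T V))
    (hσ : IsRun σ) (hE : runDval N σ ⊆ E) (a b : P → ℕ → ℚ) (ha : runFireable true N a σ)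
    (hb : IsMarking true b) (hab : ∀ p α, 0 < a p α → 0 < b p α) :
    ∃ (b' : P → ℕ → ℚ) (ρ τ : List (Step T V)), IsMarking true b' ∧ IsRun ρ ∧ IsRun τ ∧
      ρ.length ≤ (unmarked E b).card ∧ Reaches true N b ρ b' ∧
      (∀ s' ∈ τ, ∃ s ∈ σ, 0 < s.c ∧ s'.t = s.t ∧ s'.π = s.π) ∧
      (∀ p α, 2 * (runEffect N ρ p α + runEffect N τ p α) = runEffect N σ p α) ∧
      (∀ p α, 0 < b p α → 0 < b' p α) ∧
      (∀ s ∈ σ, 0 < s.c → ∀ p x, 0 < N.pre p s.t x ∨ 0 < N.post s.t p x →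
        0 < b' p (s.π x)) := by
  induction σ generalizing a b with
  | nil =>
    refine ⟨b, [], [], hb, by simp [IsRun], by simp [IsRun], by simp, ⟨trivial, ?_⟩,
      by simp, by simp [runEffect], fun _ _ h => h, by simp⟩
    simp [runEffect]
  | cons s σ ih =>
    obtain ⟨hsa, hσa⟩ := ha
    obtain ⟨hc0, hinj⟩ : IsStep s := hσ s (by simp)
    have hσ' : IsRun σ := fun r hr => hσ r (by simp [hr])
    have hE' : runDval N σ ⊆ E := by
      rintro α ⟨r, hr, h⟩
      exact hE ⟨r, by simp [hr], h⟩
    have hpre0 := compInv_preMat_nonneg N s.t s.π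
    have hpost0 := compInv_preMat_nonneg N.rev s.t s.π
    have hsa' := hsa.2 rfl
    rcases hc0.eq_or_lt with hc | hc
    · have hzero : ∀ p α, stepEffect N s p α = 0 := by
        intro p α
        rw [stepEffect, ← hc, zero_mul]
      simp only [hzero, add_zero] at hσa
      obtain ⟨b', ρ, τ, h1, h2, h3, h4, h5, h6, h7, h8, h9⟩ := ih hσ' hE' a b hσa hb hab
      refine ⟨b', ρ, τ, h1, h2, h3, h4, h5, ?_, ?_, h8, ?_⟩
      · intro s' hs'
        obtain ⟨r, hr, h⟩ := h6 s' hs'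
        exact ⟨r, by simp [hr], h⟩
      · intro p α
        rw [h7, runEffect_cons, hzero, zero_add]
      · intro r hr hrc
        rcases List.mem_cons.1 hr with rfl | hr
        · exact absurd hrc hc.not_lt
        · exact h9 r hr hrc
    have hpreb : ∀ p α, 0 < compInv (preMat N s.t) s.π p α → 0 < b p α := fun p α h =>
      hab p α (by have := hsa' p α; have := mul_pos hc h; linarith)
    have hsupp : ∀ p α, 0 < a p α + stepEffect N s p α →
        0 < b p α ∨ 0 < compInv (preMat N.rev s.t) s.π p α := by
      intro p α h
      by_contra! hcon
      have hpost : compInv (preMat N.rev s.t) s.π p α = 0 := le_antisymm hcon.2 (hpost0 p α)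
      rw [stepEffect_eq, hpost] at h
      have := mul_nonneg hc.le (hpre0 p α)
      exact absurd (hab p α (by linarith)) hcon.1.not_gt
    have htouch : ∀ b₁ : P → ℕ → ℚ, (∀ p α, 0 < b p α → 0 < b₁ p α) →
        (∀ p α, 0 < compInv (preMat N.rev s.t) s.π p α → 0 < b₁ p α) →
        ∀ p x, 0 < N.pre p s.t x ∨ 0 < N.post s.t p x → 0 < b₁ p (s.π x) := by
      rintro b₁ hb₁ hb₁' p x (h | h)
      · exact hb₁ _ _ (hpreb _ _ ((compInv_preMat_pos_iff _ _ _ _ _).2 ⟨x, h, rfl⟩))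
      · exact hb₁' _ _ ((compInv_preMat_pos_iff _ _ _ _ _).2 ⟨x, h, rfl⟩)
    by_cases hnew : ∀ p α, 0 < compInv (preMat N.rev s.t) s.π p α → 0 < b p α
    · obtain ⟨b', ρ, τ, h1, h2, h3, h4, h5, h6, h7, h8, h9⟩ := ih hσ' hE' _ b hσa hb
        fun p α h => (hsupp p α h).elim id (hnew p α)
      refine ⟨b', ρ, ⟨s.c / 2, s.t, s.π⟩ :: τ, h1, h2, ?_, h4, h5, ?_, ?_, h8, ?_⟩
      · intro r hr
        rcases List.mem_cons.1 hr with rfl | hr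
        · exact ⟨(half_pos hc).le, hinj⟩
        · exact h3 r hr
      · intro s' hs'
        rcases List.mem_cons.1 hs' with rfl | hs'
        · exact ⟨s, by simp, hc, rfl, rfl⟩
        · obtain ⟨r, hr, h⟩ := h6 s' hs'
          exact ⟨r, by simp [hr], h⟩
      · intro p α
        rw [runEffect_cons, runEffect_cons, ← h7]
        simp only [stepEffect]
        ring
      · intro r hr hrc
        rcases List.mem_cons.1 hr with rfl | hr
        · exact htouch b' h8 fun p α h => h8 p α (hnew p α h)
        · exact h9 r hr hrc
    · push Not at hnew
      obtain ⟨q, β, hqpost, hqb⟩ := hnew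
      obtain ⟨ε, hε, hεc, hεb⟩ := exists_small_coeff N s.t s.π b (half_pos hc)
      set s₁ : Step T V := ⟨ε, s.t, s.π⟩ with hs₁
      set b₁ : P → ℕ → ℚ := fun p α => b p α + stepEffect N s₁ p α with hb₁
      have hfire : ∀ p α, 0 ≤ b p α - ε * compInv (preMat N s.t) s.π p α := by
        intro p α
        rcases (hpre0 p α).eq_or_lt with h | h
        · rw [← h, mul_zero, sub_zero]
          exact hb.2 rfl p α
        · exact sub_nonneg.2 (hεb p α (hpreb p α h)).le
      have hb₁eq : ∀ p α, b₁ p α = b p α - ε * compInv (preMat N s.t) s.π p α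
          + ε * compInv (preMat N.rev s.t) s.π p α := by
        intro p α
        simp only [hb₁, stepEffect_eq, hs₁]
        ring
      have hmono : ∀ p α, 0 < b p α → 0 < b₁ p α := by
        intro p α h
        rw [hb₁eq]
        exact add_pos_of_pos_of_nonneg (sub_pos.2 (hεb p α h)) (mul_nonneg hε.le (hpost0 p α))
      have hpost : ∀ p α, 0 < compInv (preMat N.rev s.t) s.π p α → 0 < b₁ p α := by
        intro p α h
        rw [hb₁eq]
        exact add_pos_of_nonneg_of_pos (hfire p α) (mul_pos hε h)
      have hb₁m : IsMarking true b₁ := by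
        refine ⟨hb.1.add_stepEffect N s₁, fun _ p α => ?_⟩
        rw [hb₁eq]
        exact add_nonneg (hfire p α) (mul_nonneg hε.le (hpost0 p α))
      have hcard : (unmarked E b₁).card < (unmarked E b).card := by
        refine Finset.card_lt_card (Finset.ssubset_iff_of_subset ?_ |>.2 ⟨(q, β), ?_, ?_⟩)
        · intro pa hpa
          simp only [unmarked, Finset.mem_filter] at hpa ⊢
          exact ⟨hpa.1, fun h => hpa.2 (hmono _ _ h)⟩
        · obtain ⟨x, hx, hxβ⟩ := (compInv_preMat_pos_iff _ _ _ _ _).1 hqpost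
          have hβ : β ∈ E := by
            exact_mod_cast hE ⟨s, by simp, x, ⟨q, Or.inr (Nat.pos_iff_ne_zero.1 hx)⟩, hxβ⟩
          simpa [unmarked, hβ] using hqb
        · simp [unmarked, hpost q β hqpost]
      obtain ⟨b', ρ, τ, h1, h2, h3, h4, h5, h6, h7, h8, h9⟩ := ih hσ' hE' _ b₁ hσa hb₁m
        fun p α h => (hsupp p α h).elim (hmono p α) (hpost p α)
      refine ⟨b', s₁ :: ρ, ⟨s.c / 2 - ε, s.t, s.π⟩ :: τ, h1, ?_, ?_, ?_, h5.cons ?_, ?_, ?_,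
        fun p α h => h8 p α (hmono p α h), ?_⟩
      · intro r hr
        rcases List.mem_cons.1 hr with rfl | hr
        · exact ⟨hε.le, hinj⟩
        · exact h2 r hr
      · intro r hr
        rcases List.mem_cons.1 hr with rfl | hr
        · exact ⟨sub_nonneg.2 hεc, hinj⟩
        · exact h3 r hr
      · rw [List.length_cons]
        omega
      · exact ⟨hb.1.sub_mul_compInv _ _ _, fun _ => hfire⟩
      · intro s' hs'
        rcases List.mem_cons.1 hs' with rfl | hs'
        · exact ⟨s, by simp, hc, rfl, rfl⟩
        · obtain ⟨r, hr, h⟩ := h6 s' hs'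
          exact ⟨r, by simp [hr], h⟩
      · intro p α
        rw [runEffect_cons, runEffect_cons, runEffect_cons, ← h7]
        simp only [stepEffect, hs₁]
        ring
      · intro r hr hrc
        rcases List.mem_cons.1 hr with rfl | hr
        · exact htouch b' (fun p α h => h8 p α (hmono p α h)) fun p α h => h8 p α (hpost p α h)
        · exact h9 r hr hrc

theorem card_unmarked_le (E : Finset ℕ) (b : P → ℕ → ℚ) :
    (unmarked E b).card ≤ Fintype.card P * E.card :=
  (Finset.card_filter_le _ _).trans (by rw [Finset.card_product, Finset.card_univ])

theorem runDval_finite (N : UDPN P T V) (ρ : List (Step T V)) : (runDval N ρ).Finite := by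
  have h : (⋃ s ∈ {s | s ∈ ρ}, Set.range s.π).Finite :=
    (List.finite_toSet ρ).biUnion fun s _ => Set.finite_range s.π
  refine h.subset ?_
  rintro α ⟨s, hs, x, -, hx⟩
  exact Set.mem_biUnion hs ⟨x, hx⟩

theorem runDval_rev (N : UDPN P T V) (ρ : List (Step T V)) :
    runDval N.rev ρ.reverse = runDval N ρ := by
  simp [runDval, varsOf, UDPN.rev, or_comm]

/-- Strengthened decomposition of a ℚ⁺-run: the ℚ⁺-runs from
`i` to `i'` and from `f'` to `f` can be chosen with at most `|P|·|dval(σ)|`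
steps, and `σ'` uses only data values of `σ`. -/
theorem qplus_reach_decomposition
    (N : UDPN P T V) (i f : P → ℕ → ℚ)
    (hi : IsMarking true i) (hf : IsMarking true f)
    (σ : List (Step T V)) (hσ : IsRun σ) (hσr : Reaches true N i σ f) :
    ∃ (i' f' : P → ℕ → ℚ) (σ' : List (Step T V)),
      IsMarking true i' ∧ IsMarking true f' ∧ IsRun σ' ∧
      runDval N σ' ⊆ runDval N σ ∧
      (∃ ρ₁ : List (Step T V), IsRun ρ₁ ∧
        ρ₁.length ≤ Fintype.card P * (runDval N σ).ncard ∧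
        Reaches true N i ρ₁ i') ∧
      Reaches false N i' σ' f' ∧
      (∃ ρ₂ : List (Step T V), IsRun ρ₂ ∧
        ρ₂.length ≤ Fintype.card P * (runDval N σ).ncard ∧
        Reaches true N f' ρ₂ f) ∧
      (∀ pa ∈ preSet N σ', 0 < i' pa.1 pa.2) ∧
      (∀ pa ∈ postSet N σ', 0 < f' pa.1 pa.2) := by
  have hfin := runDval_finite N σ
  set E := hfin.toFinset with hEdef
  have hE : runDval N σ ⊆ E := by simp [hEdef]
  have hcard : E.card = (runDval N σ).ncard := (Set.ncard_eq_toFinset_card _ hfin).symm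
  obtain ⟨i', ρ₁, τ₁, hi', hρ₁, hτ₁, hlen₁, hreach₁, hsub₁, heff₁, -, htouch₁⟩ :=
    exists_saturating_run N E σ hσ hE i i hσr.1 hi fun _ _ h => h
  obtain ⟨f', ρ₂, τ₂, hf', hρ₂, hτ₂, hlen₂, hreach₂, hsub₂, heff₂, -, htouch₂⟩ :=
    exists_saturating_run N.rev E σ.reverse (fun s hs => hσ s (List.mem_reverse.1 hs))
      ((runDval_rev N σ).trans_subset hE) f f hσr.reverse.1 hf fun _ _ h => h
  have hsub : ∀ s' ∈ τ₁ ++ τ₂, ∃ s ∈ σ, 0 < s.c ∧ s'.t = s.t ∧ s'.π = s.π := by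
    intro s' hs'
    rcases List.mem_append.1 hs' with h | h
    · exact hsub₁ s' h
    · obtain ⟨s, hs, h⟩ := hsub₂ s' h
      exact ⟨s, List.mem_reverse.1 hs, h⟩
  refine ⟨i', f', τ₁ ++ τ₂, hi', hf', ?_, ?_,
    ⟨ρ₁, hρ₁, hcard ▸ hlen₁.trans (card_unmarked_le E i), hreach₁⟩,
    ⟨runFireable_false N _ hi'.1, ?_⟩,
    ⟨ρ₂.reverse, fun s hs => hρ₂ s (List.mem_reverse.1 hs), ?_, hreach₂.reverse⟩, ?_, ?_⟩
  · intro s hs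
    exact (List.mem_append.1 hs).elim (hτ₁ s) (hτ₂ s)
  · rintro α ⟨s', hs', x, hx, hα⟩
    obtain ⟨s, hs, -, ht, hπ⟩ := hsub s' hs'
    exact ⟨s, hs, x, ht ▸ hx, hπ ▸ hα⟩
  · funext p α
    have h₁ := heff₁ p α
    have h₂ := heff₂ p α
    rw [runEffect_reverse, runEffect_rev, runEffect_rev, runEffect_rev] at h₂
    rw [hreach₂.2, hreach₁.2, hσr.2]
    simp only [runEffect_rev, runEffect_append]
    linarith
  · rw [List.length_reverse, ← hcard]
    exact hlen₂.trans (card_unmarked_le E f)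
  · rintro ⟨p, α⟩ ⟨s', hs', x, hx, rfl⟩
    obtain ⟨s, hs, hc, ht, hπ⟩ := hsub s' hs'
    rw [ht] at hx
    exact hπ ▸ htouch₁ s hs hc p x (Or.inl hx)
  · rintro ⟨p, α⟩ ⟨s', hs', x, hx, rfl⟩
    obtain ⟨s, hs, hc, ht, hπ⟩ := hsub s' hs'
    rw [ht] at hx
    exact hπ ▸ htouch₂ s (List.mem_reverse.2 hs) hc p x (Or.inl hx)
end
end

section
/- For every UDPN N = (P,T,F,Var) and ℚ⁺-markings i, f of N, there exist a loop-less UDPN N' = (P',T',F',Var) with |P'| = 2·|P| and |T'| = |T| + |P|, and ℚ⁺-markings i', f' of N', such that f is ℚ⁺-reachable from i in N if and only if f' is ℚ⁺-reachable from i' in N'. -/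
open Finset

noncomputable section
open scoped Classical

variable {P T V : Type} [Fintype P] [Fintype T] [Fintype V]

set_option linter.unusedSectionVars false

/-- One fireable `ℚ⁺`-step leads from the first marking to the second one. -/
def OneStep (N : UDPN P T V) (m m' : P → ℕ → ℚ) : Prop :=
  ∃ s : Step T V, IsStep s ∧ stepFireable true N m s ∧
    m' = fun p α => m p α + stepEffect N s p α

theorem reach_iff_reflTransGen (N : UDPN P T V) (i f : P → ℕ → ℚ) :
    Reach true N i f ↔ Relation.ReflTransGen (OneStep N) i f := by
  constructor
  · rintro ⟨ρ, hρ, hfire, rfl⟩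
    induction ρ generalizing i with
    | nil =>
      simp only [runEffect, List.map_nil, List.sum_nil, add_zero]
      exact Relation.ReflTransGen.refl
    | cons s ρ ih =>
      have hstep : OneStep N i (fun p α => i p α + stepEffect N s p α) :=
        ⟨s, hρ s List.mem_cons_self, hfire.1, rfl⟩
      have htail := ih _ (fun u hu => hρ u (List.mem_cons_of_mem s hu)) hfire.2
      simp only [runEffect, List.map_cons, List.sum_cons, ← add_assoc] at htail ⊢
      exact Relation.ReflTransGen.head hstep htail
  · intro h
    induction h using Relation.ReflTransGen.head_induction_on with
    | refl => exact ⟨[], by simp [IsRun], trivial, by simp [runEffect]⟩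
    | head hstep _ ih =>
      obtain ⟨s, hs, hfire, rfl⟩ := hstep
      obtain ⟨ρ, hρ, hρfire, hf⟩ := ih
      refine ⟨s :: ρ, ?_, ⟨hfire, hρfire⟩, ?_⟩
      · intro u hu
        rcases List.mem_cons.1 hu with rfl | hu
        exacts [hs, hρ u hu]
      · simpa only [runEffect, List.map_cons, List.sum_cons, ← add_assoc] using hf

/-- The indicator of a fixed variable, for use as the flow of a one-token transition
(`Classical.choice ⟨x⟩` does not depend on `x`). -/
def pickVar (x : V) : ℕ := if x = Classical.choice ⟨x⟩ then 1 else 0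

/-- The loop-less version of a net: each place has an input copy `inl p` and an output copy
`inr p`. A transition `inl t` consumes from input copies and produces in output copies; the
transition `inr p` moves a token from `inr p` back to `inl p`. -/
def splitNet (N : UDPN P T V) : UDPN (P ⊕ P) (T ⊕ P) V where
  pre
    | .inl p, .inl t, x => N.pre p t x
    | .inr p, .inr q, x => if p = q then pickVar x else 0
    | _, _, _ => 0
  post
    | .inl t, .inr p, x => N.post t p x
    | .inr q, .inl p, x => if p = q then pickVar x else 0
    | _, _, _ => 0

theorem isLoopless_splitNet (N : UDPN P T V) : IsLoopless (splitNet N) := by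
  rintro (t | q) ⟨p | p, ⟨x, hx⟩, ⟨y, hy⟩⟩ <;> simp [splitNet] at hx hy

theorem compInv_delta (N : UDPN P T V) (t : T) (π : V → ℕ) (p : P) (α : ℕ) :
    compInv (delta N t) π p α =
      compInv (fun p x => (N.post t p x : ℚ)) π p α - compInv (preMat N t) π p α := by
  simp only [compInv, ← Finset.sum_sub_distrib]
  refine Finset.sum_congr rfl fun x _ => ?_
  split_ifs <;> simp [delta, preMat]

section SplitNetColumns

variable (N : UDPN P T V) (π : V → ℕ) (p : P) (α : ℕ)

theorem compInv_preMat_splitNet_inl_inl (t : T) :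
    compInv (preMat (splitNet N) (.inl t)) π (.inl p) α = compInv (preMat N t) π p α := rfl

theorem compInv_preMat_splitNet_inl_inr (t : T) :
    compInv (preMat (splitNet N) (.inl t)) π (.inr p) α = 0 := by
  simp [compInv, preMat, splitNet]

theorem compInv_preMat_splitNet_inr_inl (q : P) :
    compInv (preMat (splitNet N) (.inr q)) π (.inl p) α = 0 := by
  simp [compInv, preMat, splitNet]

theorem compInv_preMat_splitNet_inr_inr (q : P) :
    compInv (preMat (splitNet N) (.inr q)) π (.inr p) α =
      if p = q then ∑ x, if π x = α then (pickVar x : ℚ) else 0 else 0 := by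
  split_ifs with h <;> simp [compInv, preMat, splitNet, h]

theorem compInv_delta_splitNet_inl_inl (t : T) :
    compInv (delta (splitNet N) (.inl t)) π (.inl p) α = -compInv (preMat N t) π p α := by
  rw [compInv_delta, compInv_preMat_splitNet_inl_inl]
  simp [compInv, splitNet]

theorem compInv_delta_splitNet_inl_inr (t : T) :
    compInv (delta (splitNet N) (.inl t)) π (.inr p) α =
      compInv (fun p x => (N.post t p x : ℚ)) π p α := by
  rw [compInv_delta, compInv_preMat_splitNet_inl_inr, sub_zero]
  rfl

theorem compInv_delta_splitNet_inr_inl (q : P) :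
    compInv (delta (splitNet N) (.inr q)) π (.inl p) α =
      if p = q then ∑ x, if π x = α then (pickVar x : ℚ) else 0 else 0 := by
  rw [compInv_delta, compInv_preMat_splitNet_inr_inl]
  split_ifs with h <;> simp [compInv, splitNet, h]

theorem compInv_delta_splitNet_inr_inr (q : P) :
    compInv (delta (splitNet N) (.inr q)) π (.inr p) α =
      -if p = q then ∑ x, if π x = α then (pickVar x : ℚ) else 0 else 0 := by
  rw [compInv_delta, compInv_preMat_splitNet_inr_inr]
  simp [compInv, splitNet]

end SplitNetColumns

theorem sum_pickVar [Nonempty V] (π : V → ℕ) (α : ℕ) :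
    (∑ x, if π x = α then (pickVar x : ℚ) else 0) =
      if π (Classical.choice ‹Nonempty V›) = α then 1 else 0 := by
  rw [Finset.sum_eq_single (Classical.choice ‹Nonempty V›)]
  · simp [pickVar]
  · intro x _ hx
    simp [pickVar, hx]
  · simp

/-- The marking of `N` obtained by adding up the two copies of each place. -/
def mergeCopies (m : P ⊕ P → ℕ → ℚ) (p : P) (α : ℕ) : ℚ := m (.inl p) α + m (.inr p) α

theorem FinCols.mergeCopies {m : P ⊕ P → ℕ → ℚ} (h : FinCols m) :
    FinCols (mergeCopies m) := by
  refine Set.Finite.subset h ?_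
  rintro α ⟨p, hp⟩
  by_contra hα
  simp only [Set.mem_ofPred_eq, not_exists, not_not] at hα
  exact hp (by simp [_root_.mergeCopies, hα])

theorem FinCols.sumElim {a b : P → ℕ → ℚ} (ha : FinCols a) (hb : FinCols b) :
    FinCols (Sum.elim a b) := by
  refine (Set.Finite.union ha hb).subset ?_
  rintro α ⟨p | p, hp⟩
  exacts [Or.inl ⟨p, hp⟩, Or.inr ⟨p, hp⟩]

theorem finCols_zero : FinCols (0 : P → ℕ → ℚ) := by simp [FinCols]

theorem FinCols.of_eq_zero {a b : P → ℕ → ℚ} (ha : FinCols a)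
    (h : ∀ p α, a p α = 0 → b p α = 0) : FinCols b :=
  Set.Finite.subset ha fun α ⟨p, hp⟩ => ⟨p, fun h0 => hp (h p α h0)⟩

theorem FinCols.add {a b : P → ℕ → ℚ} (ha : FinCols a) (hb : FinCols b) :
    FinCols (a + b) := (ha.sumElim hb).mergeCopies

theorem finCols_compInv (A : P → V → ℚ) (π : V → ℕ) : FinCols (compInv A π) := by
  refine (Set.finite_range π).subset ?_
  rintro α ⟨p, hp⟩
  obtain ⟨x, -, hx⟩ := Finset.exists_ne_zero_of_sum_ne_zero hp
  exact ⟨x, by by_contra h; simp [h] at hx⟩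

theorem IsMarking.sumElim_zero {m : P → ℕ → ℚ} (h : IsMarking true m) :
    IsMarking true (Sum.elim m 0 : P ⊕ P → ℕ → ℚ) := by
  refine ⟨h.1.sumElim finCols_zero, ?_⟩
  rintro - (p | p) α
  exacts [h.2 rfl p α, le_rfl]

/-- Steps of the split net either simulate a step of `N` or leave the merged marking alone. -/
theorem OneStep.mergeCopies {N : UDPN P T V} {m m' : P ⊕ P → ℕ → ℚ}
    (h : OneStep (splitNet N) m m') :
    Relation.ReflTransGen (OneStep N) (mergeCopies m) (mergeCopies m') := by
  obtain ⟨⟨c, t | q, π⟩, hs, ⟨hfin, hnonneg⟩, rfl⟩ := h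
  · refine Relation.ReflTransGen.single ⟨⟨c, t, π⟩, hs, ?_, ?_⟩
    · have key : (fun p α => _root_.mergeCopies m p α - c * compInv (preMat N t) π p α) =
          _root_.mergeCopies
            (fun p α => m p α - c * compInv (preMat (splitNet N) (.inl t)) π p α) := by
        funext p α
        simp only [_root_.mergeCopies, compInv_preMat_splitNet_inl_inl,
          compInv_preMat_splitNet_inl_inr]
        ring
      refine ⟨key ▸ hfin.mergeCopies, fun _ p α => ?_⟩
      exact (congrFun (congrFun key p) α).symm ▸
        add_nonneg (hnonneg rfl (.inl p) α) (hnonneg rfl (.inr p) α)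
    · funext p α
      simp only [_root_.mergeCopies, stepEffect, compInv_delta_splitNet_inl_inl,
        compInv_delta_splitNet_inl_inr, compInv_delta N t]
      ring
  · have key : _root_.mergeCopies
        (fun p α => m p α + stepEffect (splitNet N) ⟨c, .inr q, π⟩ p α) =
          _root_.mergeCopies m := by
      funext p α
      simp only [_root_.mergeCopies, stepEffect, compInv_delta_splitNet_inr_inl,
        compInv_delta_splitNet_inr_inr]
      ring
    rw [key]

/-- All tokens with one datum in one output copy can be moved back to the input copy. -/
theorem oneStep_splitNet_transfer [Nonempty V] (N : UDPN P T V) {a b : P → ℕ → ℚ}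
    (ha : IsMarking true a) (hb : IsMarking true b) (q : P) (β : ℕ) :
    OneStep (splitNet N) (Sum.elim a b)
      (Sum.elim (fun p α => a p α + if p = q ∧ β = α then b p α else 0)
        (fun p α => b p α - if p = q ∧ β = α then b p α else 0)) := by
  obtain ⟨π₀, hπ₀⟩ := exists_injective_nat V
  set x₀ : V := Classical.choice ‹Nonempty V›
  set π : V → ℕ := Equiv.swap (π₀ x₀) β ∘ π₀
  have hπx₀ : π x₀ = β := by simp [π]
  have hweight : ∀ p α, b q β * (if p = q then if β = α then (1 : ℚ) else 0 else 0) =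
      if p = q ∧ β = α then b p α else 0 := by
    intro p α
    by_cases hp : p = q <;> by_cases hα : β = α <;> simp [hp, hα]
  have hpre : (fun p α => Sum.elim a b p α -
      b q β * compInv (preMat (splitNet N) (.inr q)) π p α) =
      Sum.elim a (fun p α => b p α - if p = q ∧ β = α then b p α else 0) := by
    funext p α
    rcases p with p | p
    · simp [compInv_preMat_splitNet_inr_inl]
    · rw [compInv_preMat_splitNet_inr_inr, sum_pickVar, hπx₀, hweight]
      rfl
  refine ⟨⟨b q β, .inr q, π⟩, ⟨hb.2 rfl q β, (Equiv.injective _).comp hπ₀⟩, ⟨?_, ?_⟩, ?_⟩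
  · rw [hpre]
    exact ha.1.sumElim (hb.1.of_eq_zero fun p α h => by simp [h])
  · rintro - p α
    refine (congrFun (congrFun hpre p) α).symm ▸ ?_
    rcases p with p | p
    · exact ha.2 rfl p α
    · have := hb.2 rfl p α
      simp only [Sum.elim_inr]
      split_ifs <;> simp [this]
  · funext p α
    rcases p with p | p
    · simp only [stepEffect, Sum.elim_inl]
      rw [compInv_delta_splitNet_inr_inl, sum_pickVar, hπx₀, hweight]
    · simp only [stepEffect, Sum.elim_inr]
      rw [compInv_delta_splitNet_inr_inr, sum_pickVar, hπx₀, mul_neg, hweight,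
        sub_eq_add_neg]

/-- All tokens in the output copies can be moved back to the input copies. -/
theorem reflTransGen_splitNet_transfer [Nonempty V] (N : UDPN P T V) {a b : P → ℕ → ℚ}
    (ha : IsMarking true a) (hb : IsMarking true b) :
    Relation.ReflTransGen (OneStep (splitNet N)) (Sum.elim a b) (Sum.elim (a + b) 0) := by
  have hsupp : ∃ S : Finset (P × ℕ), ∀ p α, (p, α) ∉ S → b p α = 0 := by
    refine ⟨Finset.univ ×ˢ hb.1.toFinset, fun p α h => ?_⟩
    by_contra hne
    exact h (Finset.mem_product.2 ⟨Finset.mem_univ p, hb.1.mem_toFinset.2 ⟨p, hne⟩⟩)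
  obtain ⟨S, hS⟩ := hsupp
  induction S using Finset.induction_on generalizing a b with
  | empty =>
    obtain rfl : b = 0 := by
      funext p α
      exact hS p α (Finset.notMem_empty _)
    rw [add_zero]
  | insert u S _ ih =>
    obtain ⟨q, β⟩ := u
    refine Relation.ReflTransGen.head (oneStep_splitNet_transfer N ha hb q β) ?_
    have hsplit : a + b = (fun p α => a p α + if p = q ∧ β = α then b p α else 0) +
        (fun p α => b p α - if p = q ∧ β = α then b p α else 0) := by
      funext p α
      simp only [Pi.add_apply]
      ring
    rw [hsplit]
    refine ih ⟨ha.1.add (hb.1.of_eq_zero fun p α h => by simp [h]), ?_⟩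
      ⟨hb.1.of_eq_zero fun p α h => by simp [h], ?_⟩ ?_
    · intro _ p α
      have h₁ := ha.2 rfl p α
      have h₂ := hb.2 rfl p α
      dsimp only
      split_ifs <;> linarith
    · intro _ p α
      have h₂ := hb.2 rfl p α
      dsimp only
      split_ifs <;> linarith
    · intro p α h
      by_cases hu : p = q ∧ β = α
      · simp [hu]
      · simp only [hu, if_false, sub_zero]
        refine hS p α fun hmem => ?_
        rcases Finset.mem_insert.1 hmem with heq | hmem
        · exact hu ⟨congrArg Prod.fst heq, (congrArg Prod.snd heq).symm⟩
        · exact h hmem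

/-- The split net simulates every step of `N`. -/
theorem OneStep.sumElim_zero {N : UDPN P T V} {m m' : P → ℕ → ℚ} (h : OneStep N m m') :
    Relation.ReflTransGen (OneStep (splitNet N)) (Sum.elim m 0) (Sum.elim m' 0) := by
  obtain ⟨⟨c, t, π⟩, hs, hfire, rfl⟩ := h
  set a : P → ℕ → ℚ := fun p α => m p α - c * compInv (preMat N t) π p α with ha
  set b : P → ℕ → ℚ := fun p α => c * compInv (fun p x => (N.post t p x : ℚ)) π p α with hb
  have hb_marking : IsMarking true b := by
    refine ⟨(finCols_compInv (fun p x => (N.post t p x : ℚ)) π).of_eq_zero fun p α h => ?_, fun _ p α => ?_⟩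
    · exact mul_eq_zero_of_right c h
    · exact mul_nonneg hs.1 (Finset.sum_nonneg fun x _ => by split_ifs <;> simp)
  have hstep : OneStep (splitNet N) (Sum.elim m 0) (Sum.elim a b) := by
    have hpre : (fun p α => (Sum.elim m 0 : P ⊕ P → ℕ → ℚ) p α -
        c * compInv (preMat (splitNet N) (.inl t)) π p α) = Sum.elim a 0 := by
      funext p α
      rcases p with p | p
      · rfl
      · simp [compInv_preMat_splitNet_inl_inr]
    refine ⟨⟨c, .inl t, π⟩, hs, ?_, ?_⟩
    · have hmark := IsMarking.sumElim_zero (m := a) hfire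
      rw [← hpre] at hmark
      exact hmark
    · funext p α
      rcases p with p | p
      · simp [ha, stepEffect, compInv_delta_splitNet_inl_inl, sub_eq_add_neg]
      · simp [hb, stepEffect, compInv_delta_splitNet_inl_inr]
  have htotal : (fun p α => m p α + stepEffect N ⟨c, t, π⟩ p α) = a + b := by
    funext p α
    simp only [stepEffect, compInv_delta, ha, hb, Pi.add_apply]
    ring
  refine Relation.ReflTransGen.head hstep ?_
  rw [htotal]
  rcases isEmpty_or_nonempty V with _ | _
  · obtain hb_zero : b = 0 := by
      funext p α
      simp [hb, compInv]
    rw [hb_zero, add_zero]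
  · exact reflTransGen_splitNet_transfer N hfire hb_marking

theorem reach_splitNet_iff (N : UDPN P T V) (i f : P → ℕ → ℚ) :
    Reach true (splitNet N) (Sum.elim i 0) (Sum.elim f 0) ↔ Reach true N i f := by
  rw [reach_iff_reflTransGen, reach_iff_reflTransGen]
  have hmerge : ∀ m : P → ℕ → ℚ, mergeCopies (Sum.elim m 0) = m := fun m => by
    funext p α
    simp [mergeCopies]
  constructor <;> intro h
  · rw [← hmerge i, ← hmerge f]
    exact h.lift' mergeCopies fun _ _ => OneStep.mergeCopies
  · exact h.lift' (fun m : P → ℕ → ℚ => (Sum.elim m 0 : P ⊕ P → ℕ → ℚ))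
      fun _ _ => OneStep.sumElim_zero

/-- Every UDPN with ℚ⁺-markings `i`, `f` can be transformed,
preserving ℚ⁺-reachability, into a loop-less UDPN with `2·|P|` places
(`P ⊕ P`) and `|T| + |P|` transitions (`T ⊕ P`), with ℚ⁺-markings `i'`, `f'`. -/
theorem loopless_transformation
    (N : UDPN P T V) (i f : P → ℕ → ℚ)
    (hi : IsMarking true i) (hf : IsMarking true f) :
    ∃ (N' : UDPN (P ⊕ P) (T ⊕ P) V) (i' f' : (P ⊕ P) → ℕ → ℚ),
      IsLoopless N' ∧ IsMarking true i' ∧ IsMarking true f' ∧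
      Fintype.card (P ⊕ P) = 2 * Fintype.card P ∧
      Fintype.card (T ⊕ P) = Fintype.card T + Fintype.card P ∧
      (Reach true N i f ↔ Reach true N' i' f') := by
  exact ⟨splitNet N, Sum.elim i 0, Sum.elim f 0, isLoopless_splitNet N, hi.sumElim_zero,
    hf.sumElim_zero, by rw [Fintype.card_sum, two_mul], Fintype.card_sum,
    (reach_splitNet_iff N i f).symm⟩
end
end
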